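/- Let A be an algebra, τ an automorphism of A, δ a τ-derivation with τδ = q^s δτ for a nonzero integer s, where q acts as a primitive l-th root of unity ε with gcd(l,s)=1, and suppose δ is locally nilpotent. Then in the Ore extension R = A[x; τ, δ] specialized at q = ε, the element x^l satisfies x^l a = τ^l(a) x^l + (terms involving δ), and if moreover δ^l = 0 on the relevant elements and τ^l = id, then x^l is central in R_ε. (Special case: the l-th power of a q-skew generator lies in the center at an admissible root of unity.) -/

import Mathlib

/-!
Since `τ` need not be `K`-linear, it may move `q`, so the `q`-binomial theorem does not apply
directly to `x ^ l * a`. A `τ`-fixed central idempotent `e` splits the algebra. On its part `τ`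
fixes `q`, and the `q`-binomial coefficients vanish as usual. On the complementary part `δ` is an
inner `τ`-derivation `a ↦ d * a - τ a * d`, so `x = d + y` with `y * a = τ a * y`. There `y ^ l = 0`
because the conjugates of `q` differ, and `y * d = q * d * y`, whence `x ^ l = d ^ l`.

That `d ^ l` is central is checked at each maximal ideal of the centre. Nilpotency of `δ` forces the
skew powers `q * τ q * ⋯ * τ^(k-1) q`, `k < l`, to be distinct there: they run through the roots of
some `X ^ P - 1`, by linear independence of characters. Newton interpolation at these `l` nodes,
which are roots of `z ^ l = 1`, then replaces the `q`-binomial theorem.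
-/

open Finset

/-- The coefficients of the expansion of `z ^ m` in the Newton basis with nodes `N`. They generalize
both the binomial coefficients (`N k = 1`) and the `q`-binomial ones (`N k = q ^ k`), and govern
the powers of operators that commute up to the scalars `N k`. -/
def newtonCoeff {K : Type*} [CommRing K] (N : ℕ → K) : ℕ → ℕ → K
  | 0, 0 => 1
  | 0, _ + 1 => 0
  | m + 1, 0 => newtonCoeff N m 0 * N 0
  | m + 1, k + 1 => newtonCoeff N m (k + 1) * N (k + 1) + newtonCoeff N m k

section NewtonCoeff

variable {K : Type*} [CommRing K] {N : ℕ → K}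

theorem newtonCoeff_eq_zero_of_lt : ∀ {m k : ℕ}, m < k → newtonCoeff N m k = 0
  | 0, k + 1, _ => rfl
  | m + 1, k + 1, h => by
    rw [newtonCoeff, newtonCoeff_eq_zero_of_lt (show m < k + 1 by omega),
      newtonCoeff_eq_zero_of_lt (show m < k by omega), zero_mul, add_zero]

theorem newtonCoeff_self : ∀ m : ℕ, newtonCoeff N m m = 1
  | 0 => rfl
  | m + 1 => by
    rw [newtonCoeff, newtonCoeff_eq_zero_of_lt (Nat.lt_succ_self m), newtonCoeff_self m, zero_mul,
      zero_add]

theorem newtonCoeff_zero_right (hN0 : N 0 = 1) : ∀ m : ℕ, newtonCoeff N m 0 = 1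
  | 0 => rfl
  | m + 1 => by rw [newtonCoeff, newtonCoeff_zero_right hN0 m, hN0, one_mul]

theorem sum_newtonCoeff_succ {M : Type*} [AddCommGroup M] [Module K M] (g : ℕ → M) (m : ℕ) :
    ∑ k ∈ range (m + 2), newtonCoeff N (m + 1) k • g k =
      ∑ k ∈ range (m + 1), newtonCoeff N m k • (N k • g k + g (k + 1)) := by
  rw [sum_range_succ']
  simp only [newtonCoeff, add_smul, smul_add, mul_smul, sum_add_distrib]
  rw [sum_range_succ (fun k => newtonCoeff N m (k + 1) • N (k + 1) • g (k + 1)),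
    newtonCoeff_eq_zero_of_lt (Nat.lt_succ_self m),
    sum_range_succ' (fun k => newtonCoeff N m k • N k • g k)]
  simp only [zero_smul, add_zero]
  abel

theorem pow_apply_eq_sum_newtonCoeff {M : Type*} [AddCommGroup M] [Module K M]
    (T : Module.End K M) (G : ℕ → ℕ → M)
    (hT : ∀ i k, T (G i k) = N k • G (i + 1) k + G i (k + 1)) (m : ℕ) :
    (T ^ m) (G 0 0) = ∑ k ∈ range (m + 1), newtonCoeff N m k • G (m - k) k := by
  induction m with
  | zero => simp [newtonCoeff]
  | succ m ih =>
    rw [pow_succ', Module.End.mul_apply, ih, map_sum]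
    have hsucc := sum_newtonCoeff_succ (N := N) (fun k => G (m + 1 - k) k) m
    refine .trans (sum_congr rfl fun k hk => ?_) hsucc.symm
    rw [map_smul, hT, Nat.sub_add_comm (Nat.lt_succ_iff.1 (mem_range.1 hk)), Nat.succ_sub_succ]

theorem pow_apply_eq_add {M : Type*} [AddCommGroup M] [Module K M] (T : Module.End K M)
    (G : ℕ → ℕ → M) (hT : ∀ i k, T (G i k) = N k • G (i + 1) k + G i (k + 1)) (hN0 : N 0 = 1)
    {l : ℕ} (hl : 0 < l) (hG : ∀ k, 0 < k → k < l → newtonCoeff N l k • G (l - k) k = 0) :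
    (T ^ l) (G 0 0) = G l 0 + G 0 l := by
  rw [pow_apply_eq_sum_newtonCoeff T G hT, sum_eq_add_of_mem 0 l (by simp) (by simp) hl.ne]
  · rw [newtonCoeff_zero_right hN0, newtonCoeff_self, one_smul, one_smul, Nat.sub_zero,
      Nat.sub_self]
  · rintro k hk ⟨hk0, hkl⟩
    exact hG k (Nat.pos_of_ne_zero hk0)
      (lt_of_le_of_ne (Nat.lt_succ_iff.1 (mem_range.1 hk)) hkl)

theorem pow_eq_sum_newtonCoeff (z : K) (m : ℕ) :
    z ^ m = ∑ k ∈ range (m + 1), newtonCoeff N m k * ∏ j ∈ range k, (z - N j) := by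
  have h := pow_apply_eq_sum_newtonCoeff (N := N) (LinearMap.mulLeft K z)
    (fun _ k => ∏ j ∈ range k, (z - N j))
    (fun _ k => by rw [LinearMap.mulLeft_apply, prod_range_succ, smul_eq_mul]; ring) m
  simpa using h

-- Evaluating the Newton expansion of `z ^ l` at `z = N k` gives a triangular system.
theorem newtonCoeff_mul_vandermonde_eq_zero {l k : ℕ} (hN0 : N 0 = 1) (hN : ∀ j, N j ^ l = 1)
    (hk : 0 < k) (hkl : k < l) :
    newtonCoeff N l k * ∏ i ∈ range (k + 1), ∏ j ∈ range i, (N i - N j) = 0 := by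
  induction k using Nat.strong_induction_on with
  | _ k ih =>
    set V : ℕ → K := fun k => ∏ i ∈ range k, ∏ j ∈ range i, (N i - N j)
    have heval := congrArg (· * V k) (pow_eq_sum_newtonCoeff (N := N) (N k) l)
    simp only [hN, one_mul, sum_mul] at heval
    rw [sum_eq_add_of_mem 0 k (by simp) (by simp; omega) hk.ne] at heval
    · rw [newtonCoeff_zero_right hN0, range_zero, prod_empty, one_mul, one_mul, left_eq_add,
        mul_assoc] at heval
      rwa [prod_range_succ, mul_comm (∏ i ∈ range k, _)]
    · rintro j - ⟨hj0, hjk⟩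
      rcases lt_or_gt_of_ne hjk with hjk | hjk
      · obtain ⟨v, hv⟩ : V (j + 1) ∣ V k :=
          prod_dvd_prod_of_subset _ _ _ (range_subset_range.2 hjk)
        rw [hv, mul_right_comm, ← mul_assoc (newtonCoeff N l j),
          ih j hjk (Nat.pos_of_ne_zero hj0) (hjk.trans hkl), zero_mul, zero_mul]
      · rw [prod_eq_zero (mem_range.2 hjk) (sub_self _), mul_zero, zero_mul]

theorem newtonCoeff_primitiveRoot_pow_eq_zero [IsDomain K] {q : K} {l k : ℕ}
    (hq : IsPrimitiveRoot q l) (hk : 0 < k) (hkl : k < l) :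
    newtonCoeff (fun j => q ^ j) l k = 0 := by
  refine (mul_eq_zero.1 (newtonCoeff_mul_vandermonde_eq_zero (N := fun j => q ^ j) (pow_zero q)
    (fun j => by rw [pow_right_comm, hq.pow_eq_one, one_pow]) hk hkl)).resolve_right ?_
  simp only [prod_ne_zero_iff, mem_range, sub_ne_zero]
  exact fun i hi j hj hij => hj.ne' (hq.pow_inj (by omega) (by omega) hij)

end NewtonCoeff

theorem add_pow_of_qCommute {K R : Type*} [CommRing K] [IsDomain K] [Ring R] [Algebra K R] {q : K}
    {l : ℕ} (hl : 0 < l) (hq : IsPrimitiveRoot q l) {d y : R} (h : y * d = q • (d * y)) :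
    (d + y) ^ l = d ^ l + y ^ l := by
  have hy : ∀ k, y ^ k * d = q ^ k • (d * y ^ k) := by
    intro k
    induction k with
    | zero => simp
    | succ k ih =>
      rw [pow_succ' y, mul_assoc, ih, mul_smul_comm, ← mul_assoc, h, smul_mul_assoc, smul_smul,
        pow_succ, mul_assoc]
  have hpow := pow_apply_eq_add (N := fun k => q ^ k) (LinearMap.mulRight K (d + y))
    (fun i k => d ^ i * y ^ k) (fun i k => ?_) (pow_zero q) hl fun k hk hkl => by
      rw [newtonCoeff_primitiveRoot_pow_eq_zero hq hk hkl, zero_smul]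
  · simpa [LinearMap.pow_mulRight] using hpow
  · rw [LinearMap.mulRight_apply, mul_add, mul_assoc, mul_assoc, hy, mul_smul_comm, ← mul_assoc,
      ← pow_succ, ← pow_succ]

theorem funLeft_pow_apply {K M α : Type*} [Semiring K] [AddCommMonoid M] [Module K M] (f : α → α)
    (m : ℕ) (g : α → M) (a : α) : (LinearMap.funLeft K M f ^ m) g a = g (f^[m] a) := by
  induction m generalizing g with
  | zero => rfl
  | succ m ih =>
    rw [pow_succ, Module.End.mul_apply, ih, LinearMap.funLeft_apply, Function.iterate_succ_apply']

/- By `xa = τ(a)x + δ(a)`, precomposition by `δ` is a sum of two operators that commute up to the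
scalars `N k`. Only the outer terms of its `l`-th power survive, so they cancel as `δ^l = 0`; the
case `a = 1` identifies the second one. -/
theorem pow_mul_mul_eq_of_skew {K A R : Type*} [CommRing K] [Ring A] [Ring R] [Algebra K R]
    (ψ : A →+* R) {τ δ : A → A} {x e : R} {N : ℕ → K} {l : ℕ} (hl : 0 < l) (hN0 : N 0 = 1)
    (hx : ∀ a, x * ψ a = ψ (τ a) * x + ψ (δ a)) (hex : Commute e x)
    (hskew : ∀ k a, ψ (τ^[k] (δ a)) * e = N k • (ψ (δ (τ^[k] a)) * e))
    (hN : ∀ k, 0 < k → k < l → newtonCoeff N l k • e = 0)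
    (hδl : ∀ a, δ^[l] a = 0) (hτl : ∀ a, τ^[l] a = a) (a : A) :
    x ^ l * ψ a * e = ψ a * x ^ l * e := by
  set G : ℕ → ℕ → A → R := fun i k a =>
    (∏ j ∈ range k, -N j) • (x ^ i * ψ (τ^[k] a) * x ^ k * e)
  have hT : ∀ i k, LinearMap.funLeft K R δ (G i k) = N k • G (i + 1) k + G i (k + 1) := by
    intro i k
    funext a
    have hδ : ψ (δ (τ^[k] a)) = x * ψ (τ^[k] a) - ψ (τ^[k + 1] a) * x := by
      rw [Function.iterate_succ_apply', hx, add_sub_cancel_left]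
    have hskew' : x ^ i * ψ (τ^[k] (δ a)) * x ^ k * e =
        N k • (x ^ i * (x * ψ (τ^[k] a) - ψ (τ^[k + 1] a) * x) * x ^ k * e) := by
      rw [mul_assoc, mul_assoc, (hex.pow_right k).symm.eq, ← mul_assoc (ψ _), hskew, hδ]
      simp only [smul_mul_assoc, mul_smul_comm, mul_assoc, (hex.pow_right k).eq]
    simp only [LinearMap.funLeft_apply, Pi.add_apply, Pi.smul_apply, G, hskew', prod_range_succ,
      smul_smul, pow_succ, pow_succ' x k, mul_sub, sub_mul, smul_sub, mul_neg, neg_smul]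
    simp only [mul_assoc, mul_comm (N k), sub_eq_add_neg]
  have hG : ∀ k, 0 < k → k < l → newtonCoeff N l k • G (l - k) k = 0 := by
    intro k hk hkl
    funext a
    rw [Pi.smul_apply, smul_comm, ← mul_smul_comm, hN k hk hkl, mul_zero, smul_zero, Pi.zero_apply]
  have hpow : ∀ a, x ^ l * ψ a * e = -(ψ a * ((∏ j ∈ range l, -N j) • (x ^ l * e))) := by
    intro a
    have h := congrFun (pow_apply_eq_add _ G hT hN0 hl hG) a
    rw [funLeft_pow_apply, hδl] at h
    simp only [G, Pi.add_apply, hτl, Function.iterate_zero_apply, map_zero, range_zero, prod_empty,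
      one_smul, pow_zero, one_mul, mul_one, zero_mul] at h
    rw [mul_smul_comm, ← mul_assoc, eq_neg_iff_add_eq_zero, ← h]
  have hone := hpow 1
  rw [map_one, mul_one, one_mul] at hone
  rw [hpow, ← mul_neg, ← hone, mul_assoc]

section WeightedDifference

/-- The left shift of a sequence; its minimal period at a sequence is the period of the sequence. -/
def seqShift {α : Type*} (g : ℕ → α) (j : ℕ) : α := g (j + 1)

theorem iterate_seqShift_apply {α : Type*} (k : ℕ) (g : ℕ → α) (j : ℕ) :
    seqShift^[k] g j = g (j + k) := by
  induction k generalizing g with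
  | zero => rfl
  | succ k ih => rw [Function.iterate_succ_apply, ih, seqShift, add_assoc]

/-- The weighted difference operator `g ↦ (g - seqShift g) * n` on sequences. On the values of a
character along orbits it describes the factors of `twistedDiff`. -/
def weightedDiff {F : Type*} [CommRing F] (n : ℕ → F) : Module.End F (ℕ → F) where
  toFun g := (g - seqShift g) * n
  map_add' g h := by ext j; simp only [seqShift, Pi.add_apply, Pi.sub_apply, Pi.mul_apply]; ring
  map_smul' c g := by rw [RingHom.id_apply, ← smul_mul_assoc, smul_sub]; rfl

theorem weightedDiff_apply {F : Type*} [CommRing F] (n g : ℕ → F) (j : ℕ) :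
    weightedDiff n g j = (g j - g (j + 1)) * n j := rfl

theorem weightedDiff_periodic {F : Type*} [CommRing F] {n : ℕ → F} {P : ℕ} (hnP : n.Periodic P)
    {g : ℕ → F} (hg : g.Periodic P) : (weightedDiff n g).Periodic P := fun j => by
  rw [weightedDiff_apply, weightedDiff_apply, hg, hnP, add_right_comm, hg]

variable {F : Type*} [Field F]

/-- The weights of the functional on `P`-periodic sequences that is an eigenvector, of eigenvalue
`z`, of the transpose of `weightedDiff n`; see `sum_eigenweight_mul_weightedDiff`. -/
def eigenweight (n : ℕ → F) (z : F) (P i : ℕ) : F :=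
  (∏ j ∈ Ico (i + 1) P, (1 - z / n j)) / n i

variable {n : ℕ → F} {z : F} {P : ℕ}

theorem sum_eigenweight_mul_weightedDiff (hn : ∀ j, n j ≠ 0)
    (hz : ∏ j ∈ range P, (1 - z / n j) = 1) {g : ℕ → F} (hg : g P = g 0) :
    ∑ i ∈ range P, eigenweight n z P i * weightedDiff n g i =
      z * ∑ i ∈ range P, eigenweight n z P i * g i := by
  set u : ℕ → F := fun i => ∏ j ∈ Ico i P, (1 - z / n j)
  have hu : ∀ i ∈ range P, eigenweight n z P i * weightedDiff n g i -
      z * (eigenweight n z P i * g i) = u i * g i - u (i + 1) * g (i + 1) := by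
    intro i hi
    have hui : u i = (1 - z / n i) * u (i + 1) := prod_eq_prod_Ico_succ_bot (mem_range.1 hi) _
    rw [hui, eigenweight, weightedDiff_apply]
    field_simp [hn i]
    ring
  rw [mul_sum, ← sub_eq_zero, ← sum_sub_distrib, sum_congr rfl hu, sum_range_sub']
  simp only [u, ← range_eq_Ico, hz, Ico_self, prod_empty, hg, sub_self]

theorem sum_eigenweight_mul_eq_zero (hnP : n.Periodic P) (hn : ∀ j, n j ≠ 0) (hz0 : z ≠ 0)
    (hz : ∏ j ∈ range P, (1 - z / n j) = 1) {g : ℕ → F} (hg : g.Periodic P) {m : ℕ}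
    (hm : (weightedDiff n ^ m) g = 0) : ∑ i ∈ range P, eigenweight n z P i * g i = 0 := by
  induction m generalizing g with
  | zero => simp_all
  | succ m ih =>
    rw [pow_succ, Module.End.mul_apply] at hm
    refine (mul_eq_zero.1 ?_).resolve_left hz0
    rw [← sum_eigenweight_mul_weightedDiff hn hz hg.eq, ih (weightedDiff_periodic hnP hg) hm]

-- Evaluations at distinct points are characters of `M`, so Dedekind makes them independent.
theorem prod_one_sub_div_ne_one_of_nilpotent (hP : 0 < P) (hnP : n.Periodic P)
    (hn : ∀ j, n j ≠ 0) (M : Submonoid (ℕ → F)) (hMP : ∀ g ∈ M, g.Periodic P)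
    (hMinj : ∀ i < P, ∀ j < P, (∀ g ∈ M, g i = g j) → i = j)
    (hMnil : ∀ g ∈ M, ∃ m, (weightedDiff n ^ m) g = 0) (hz0 : z ≠ 0) :
    ∏ j ∈ range P, (1 - z / n j) ≠ 1 := by
  intro hz
  let eval : Fin P → M →* F := fun i => (Pi.evalMonoidHom (fun _ => F) i.val).comp M.subtype
  have heval : Function.Injective eval := fun i j hij =>
    Fin.ext (hMinj i i.2 j j.2 fun g hg => DFunLike.congr_fun hij ⟨g, hg⟩)
  have hindep := (linearIndependent_monoidHom M F).comp eval heval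
  have hw := Fintype.linearIndependent_iff.1 hindep (fun i => eigenweight n z P i) (by
    funext g
    obtain ⟨m, hm⟩ := hMnil g g.2
    have h := sum_eigenweight_mul_eq_zero hnP hn hz0 hz (hMP g g.2) hm
    rw [← Fin.sum_univ_eq_sum_range (fun i => eigenweight n z P i * g.1 i)] at h
    simpa [eval] using h) ⟨P - 1, by omega⟩
  rw [eigenweight, Nat.sub_add_cancel hP, Ico_self, prod_empty] at hw
  exact one_div_ne_zero (hn _) hw

theorem eq_X_pow_of_forall_root_eq_zero [IsAlgClosed F] {Q : Polynomial F} (hQ : Q.Monic)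
    (hroot : ∀ z, Q.IsRoot z → z = 0) : Q = Polynomial.X ^ Q.natDegree := by
  have hs := IsAlgClosed.splits Q
  have hrep : Q.roots = Multiset.replicate Q.natDegree 0 := Multiset.eq_replicate.2
    ⟨hs.natDegree_eq_card_roots.symm, fun z hz => hroot z (Polynomial.isRoot_of_mem_roots hz)⟩
  conv_lhs => rw [hs.eq_prod_roots_of_monic hQ, hrep]
  simp

open Polynomial in
theorem prod_X_sub_C_eq_X_pow_sub_one [IsAlgClosed F] (hP : 0 < P) (hn : ∀ j, n j ≠ 0)
    (hn0 : n 0 = 1) (hz : ∀ z ≠ 0, ∏ j ∈ range P, (1 - z / n j) ≠ 1) :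
    ∏ j ∈ range P, (X - C (n j)) = X ^ P - 1 := by
  set G := ∏ j ∈ range P, (X - C (n j))
  have hG : G.Monic := monic_prod_of_monic _ _ fun j _ => monic_X_sub_C _
  have hGdeg : G.natDegree = P := by simp [G]
  have hdeg : (C (G.eval 0)).degree < G.degree :=
    degree_C_le.trans_lt (natDegree_pos_iff_degree_pos.1 (hGdeg ▸ hP))
  have hroot : ∀ z, (G - C (G.eval 0)).IsRoot z → z = 0 := by
    intro z hzroot
    by_contra hz0
    refine hz z hz0 ?_
    have hfactor : ∀ j ∈ range P, 1 - z / n j = (z - n j) / (0 - n j) := fun j _ => by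
      field_simp [hn j]
      ring
    have hG0 : G.eval 0 ≠ 0 := by
      simp [G, eval_prod, prod_ne_zero_iff, hn]
    have hGz : G.eval z = G.eval 0 := by simpa [sub_eq_zero] using hzroot
    rw [prod_congr rfl hfactor, prod_div_distrib, div_eq_one_iff_eq]
    · simpa [G, eval_prod] using hGz
    · simpa [G, eval_prod] using hG0
  have hX := eq_X_pow_of_forall_root_eq_zero (hG.sub_of_left hdeg) hroot
  rw [natDegree_sub_C, hGdeg] at hX
  have hG1 : G.eval 1 = 0 := by
    rw [eval_prod]
    exact prod_eq_zero (mem_range.2 hP) (by simp [hn0])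
  have hG0 : -G.eval 0 = 1 := by simpa [hG1] using congrArg (eval 1) hX
  rw [← hX, neg_eq_iff_eq_neg.1 hG0]
  simp

end WeightedDifference

section SkewPower

variable {C : Type*} [CommRing C] (τ : C →+* C) (W : C)

/-- The cocycle `W * τ W * ⋯ * τ ^ (k - 1) W` generated by `W`, i.e. the `k`-th power of the
operator `W τ` with the factor `τ ^ k` removed. It is the scalar by which `τ ^ k` and a
`W`-skew derivation commute. -/
def skewPow (k : ℕ) : C := ∏ i ∈ range k, τ^[i] W

/-- The product `(1 - W ^ (m - 1) τ) ⋯ (1 - W τ) (1 - τ)` of twisted difference operators, which is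
the effect of the `m`-th power of an inner `τ`-derivation on scalars. -/
def twistedDiff : ℕ → C → C
  | 0, a => a
  | m + 1, a => twistedDiff m a - W ^ m * τ (twistedDiff m a)

variable {τ W}

theorem skewPow_add (j k : ℕ) : skewPow τ W (j + k) = skewPow τ W j * τ^[j] (skewPow τ W k) := by
  simp only [skewPow, prod_range_add, ← RingHom.coe_pow, map_prod, pow_add, RingHom.mul_def,
    RingHom.comp_apply]

theorem skewPow_succ' (k : ℕ) : skewPow τ W (k + 1) = W * τ (skewPow τ W k) := by
  rw [add_comm, skewPow_add, skewPow, prod_range_one, Function.iterate_zero_apply,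
    Function.iterate_one]

theorem skewPow_pow_eq_one {l : ℕ} (hW : W ^ l = 1) (k : ℕ) : skewPow τ W k ^ l = 1 := by
  rw [skewPow, ← prod_pow]
  exact prod_eq_one fun i _ => by rw [← iterate_map_pow, hW, iterate_map_one]

theorem skewPow_mul {l : ℕ} (hτl : ∀ c, τ^[l] c = c) (m : ℕ) :
    skewPow τ W (l * m) = skewPow τ W l ^ m := by
  induction m with
  | zero => rw [Nat.mul_zero, pow_zero, skewPow, prod_range_zero]
  | succ m ih => rw [Nat.mul_succ, add_comm, skewPow_add, hτl, ih, pow_succ']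

end SkewPower

section Characters

variable {C F : Type*} [CommRing C] [CommRing F] (τ : C →+* C) (W : C) (χ : C →+* F)

/-- The sequence of values of a character `χ` along the `τ`-orbit of an element. -/
def orbitSeq : C →+* (ℕ → F) := RingHom.pi fun j => χ.comp (τ ^ j)

/-- The sequence of values of a character `χ` on the skew powers of `W`. -/
def skewSeq (j : ℕ) : F := χ (skewPow τ W j)

variable {τ W χ}

theorem orbitSeq_apply (a : C) (j : ℕ) : orbitSeq τ χ a j = χ (τ^[j] a) := by
  rw [orbitSeq, RingHom.pi_apply, RingHom.comp_apply, RingHom.coe_pow]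

theorem skewSeq_add (j k : ℕ) :
    skewSeq τ W χ (j + k) = orbitSeq τ χ (skewPow τ W k) j * skewSeq τ W χ j := by
  rw [skewSeq, skewPow_add, map_mul, mul_comm, orbitSeq_apply, skewSeq]

theorem skewSeq_zero : skewSeq τ W χ 0 = 1 := map_one χ

theorem skewSeq_one : skewSeq τ W χ 1 = χ W := by
  rw [skewSeq, skewPow, prod_range_one, Function.iterate_zero_apply]

theorem skewSeq_pow_eq_one {l : ℕ} (hW : W ^ l = 1) : skewSeq τ W χ ^ l = 1 := by
  ext j
  rw [Pi.pow_apply, skewSeq, ← map_pow, skewPow_pow_eq_one hW, map_one, Pi.one_apply]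

theorem skewSeq_ne_zero [Nontrivial F] {l : ℕ} (hl : 0 < l) (hW : W ^ l = 1) (j : ℕ) :
    skewSeq τ W χ j ≠ 0 :=
  (IsUnit.of_pow_eq_one (congrFun (skewSeq_pow_eq_one hW) j) hl.ne').ne_zero

theorem skewSeq_periodic {l : ℕ} (hτl : ∀ c, τ^[l] c = c) (hW : W ^ l = 1) :
    (skewSeq τ W χ).Periodic (l * l) := fun j => by
  rw [skewSeq_add, skewPow_mul hτl, skewPow_pow_eq_one hW, map_one, Pi.one_apply, one_mul]

theorem weightedDiff_orbitSeq_mul_pow (a : C) (k : ℕ) :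
    weightedDiff (skewSeq τ W χ) (orbitSeq τ χ a * skewSeq τ W χ ^ k) =
      orbitSeq τ χ (a - W ^ k * τ a) * skewSeq τ W χ ^ (k + 1) := by
  ext j
  have hsucc : skewSeq τ W χ (j + 1) = orbitSeq τ χ W j * skewSeq τ W χ j := by
    rw [skewSeq_add, skewPow, prod_range_one, Function.iterate_zero_apply]
  have hτa : orbitSeq τ χ a (j + 1) = orbitSeq τ χ (τ a) j := by
    rw [orbitSeq_apply, orbitSeq_apply, Function.iterate_succ_apply]
  simp only [weightedDiff_apply, Pi.mul_apply, Pi.pow_apply, hsucc, hτa,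
    map_sub, map_mul, map_pow, Pi.sub_apply]
  ring

theorem weightedDiff_pow_orbitSeq (m : ℕ) (a : C) :
    (weightedDiff (skewSeq τ W χ) ^ m) (orbitSeq τ χ a) =
      orbitSeq τ χ (twistedDiff τ W m a) * skewSeq τ W χ ^ m := by
  induction m with
  | zero => rw [pow_zero, pow_zero, mul_one, twistedDiff, Module.End.one_apply]
  | succ m ih =>
    rw [pow_succ', Module.End.mul_apply, ih, weightedDiff_orbitSeq_mul_pow, twistedDiff]

theorem exists_weightedDiff_pow_orbitSeq_mul_pow (m : ℕ) (a : C) (k : ℕ) :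
    ∃ b, (weightedDiff (skewSeq τ W χ) ^ m) (orbitSeq τ χ a * skewSeq τ W χ ^ k) =
      orbitSeq τ χ b * skewSeq τ W χ ^ (k + m) := by
  induction m with
  | zero => exact ⟨a, rfl⟩
  | succ m ih =>
    obtain ⟨b, hb⟩ := ih
    exact ⟨_, by rw [pow_succ', Module.End.mul_apply, hb, weightedDiff_orbitSeq_mul_pow,
      add_assoc]⟩

theorem exists_weightedDiff_pow_eq_zero {l : ℕ} (hl : 0 < l) (hW : W ^ l = 1)
    (hT : ∀ a j, χ (τ^[j] (twistedDiff τ W l a)) = 0) (a : C) (k : ℕ) :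
    ∃ m, (weightedDiff (skewSeq τ W χ) ^ m) (orbitSeq τ χ a * skewSeq τ W χ ^ k) = 0 := by
  obtain ⟨b, hb⟩ := exists_weightedDiff_pow_orbitSeq_mul_pow (τ := τ) (W := W) (χ := χ)
    ((l - 1) * k) a k
  have hexp : k + (l - 1) * k = l * k := by
    rw [add_comm, ← Nat.succ_mul, Nat.succ_eq_add_one, Nat.sub_add_cancel hl]
  have hb0 : orbitSeq τ χ (twistedDiff τ W l b) = 0 := funext fun j =>
    (orbitSeq_apply _ j).trans (hT b j)
  refine ⟨l + (l - 1) * k, ?_⟩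
  rw [pow_add, Module.End.mul_apply, hb, hexp, pow_mul, skewSeq_pow_eq_one hW, one_pow, mul_one,
    weightedDiff_pow_orbitSeq, hb0, zero_mul]

/-- The `P`-periodic sequences among the products of an orbit sequence and a power of the skew
sequence; evaluations at indices are characters of this monoid. -/
def periodicOrbitSubmonoid (τ : C →+* C) (W : C) (χ : C →+* F) (P : ℕ) : Submonoid (ℕ → F) where
  carrier := {g | g.Periodic P ∧ ∃ a k, g = orbitSeq τ χ a * skewSeq τ W χ ^ k}
  one_mem' := ⟨fun _ => rfl, 1, 0, by rw [map_one, pow_zero, mul_one]⟩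
  mul_mem' := by
    rintro _ _ ⟨hg, a, k, rfl⟩ ⟨hh, b, m, rfl⟩
    exact ⟨hg.mul hh, a * b, k + m, by rw [map_mul, pow_add, mul_mul_mul_comm]⟩

end Characters

section SeparatedSkewPowers

variable {C F : Type*} [CommRing C] [Field F] [IsAlgClosed F] {τ : C →+* C} {W : C} {χ : C →+* F}

theorem exists_prod_X_sub_C_skewSeq_eq {l : ℕ} (hl : 0 < l) (hτl : ∀ c, τ^[l] c = c)
    (hW : W ^ l = 1) (hT : ∀ a j, χ (τ^[j] (twistedDiff τ W l a)) = 0) :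
    ∃ P, P ∣ l * l ∧ (skewSeq τ W χ).Periodic P ∧
      ∏ j ∈ range P, (Polynomial.X - Polynomial.C (skewSeq τ W χ j)) = Polynomial.X ^ P - 1 := by
  set n := skewSeq τ W χ
  have hshift : Function.IsPeriodicPt seqShift (l * l) n :=
    funext fun j => (iterate_seqShift_apply _ _ j).trans (skewSeq_periodic hτl hW j)
  set P := Function.minimalPeriod seqShift n
  have hP : 0 < P := hshift.minimalPeriod_pos (Nat.mul_pos hl hl)
  have hnP : n.Periodic P := fun j =>
    (iterate_seqShift_apply P n j).symm.trans (congrFun Function.iterate_minimalPeriod j)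
  have hn : ∀ j, n j ≠ 0 := skewSeq_ne_zero hl hW
  have hmem : ∀ k, seqShift^[k] n ∈ periodicOrbitSubmonoid τ W χ P := fun k =>
    ⟨fun j => by rw [iterate_seqShift_apply, iterate_seqShift_apply, add_right_comm, hnP],
      skewPow τ W k, 1, funext fun j => by
        rw [iterate_seqShift_apply, pow_one, Pi.mul_apply, ← skewSeq_add]⟩
  refine ⟨P, hshift.minimalPeriod_dvd, hnP, prod_X_sub_C_eq_X_pow_sub_one hP hn skewSeq_zero
    fun z hz => prod_one_sub_div_ne_one_of_nilpotent hP hnP hn (periodicOrbitSubmonoid τ W χ P)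
      (fun g hg => hg.1) (fun i hi j hj hij => ?_) ?_ hz⟩
  · refine Function.iterate_injOn_Iio_minimalPeriod hi hj (funext fun k => ?_)
    simpa only [iterate_seqShift_apply, add_comm k] using hij _ (hmem k)
  · rintro _ ⟨-, a, k, rfl⟩
    exact exists_weightedDiff_pow_eq_zero hl hW hT a k

theorem injOn_skewSeq {l : ℕ} (hl : 0 < l) (hτl : ∀ c, τ^[l] c = c)
    (hχ : IsPrimitiveRoot (χ W) l) (hW : W ^ l = 1)
    (hT : ∀ a j, χ (τ^[j] (twistedDiff τ W l a)) = 0) :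
    Set.InjOn (skewSeq τ W χ) (Set.Iio l) := by
  obtain ⟨P, hPl, hnP, hprod⟩ := exists_prod_X_sub_C_skewSeq_eq hl hτl hW hT
  have : NeZero l := ⟨hl.ne'⟩
  have hlF : (l : F) ≠ 0 := hχ.neZero'.out
  have hPF : (P : F) ≠ 0 := fun h0 => by
    obtain ⟨k, hk⟩ := hPl
    refine mul_ne_zero hlF hlF ?_
    rw [← Nat.cast_mul, hk, Nat.cast_mul, h0, zero_mul]
  have hP : 0 < P := Nat.pos_of_ne_zero fun h => hPF (by rw [h, Nat.cast_zero])
  have hlP : l ≤ P := by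
    refine Nat.le_of_dvd hP (hχ.dvd_of_pow_eq_one _ ?_)
    have h := congrArg (Polynomial.eval (χ W)) hprod
    rw [Polynomial.eval_prod, prod_eq_zero (mem_range.2 (Nat.mod_lt 1 hP))] at h
    · simpa [sub_eq_zero] using h.symm
    · simp [hnP.map_mod_nat, skewSeq_one]
  have hsep : (∏ j ∈ range P, (Polynomial.X - Polynomial.C (skewSeq τ W χ j))).Separable :=
    hprod ▸ Polynomial.X_pow_sub_one_separable_iff.2 hPF
  intro i hi j hj hij
  exact hsep.inj_of_prod_X_sub_C (mem_range.2 (hi.trans_le hlP)) (mem_range.2 (hj.trans_le hlP)) hij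

end SeparatedSkewPowers

section Inner

variable {C A : Type*} [CommRing C] [Ring A] [Algebra C A] {τ : A →+* A} {τc : C →+* C}

theorem map_smul_of_compatible (hτc : ∀ c, τ (algebraMap C A c) = algebraMap C A (τc c)) (c : C)
    (a : A) : τ (c • a) = τc c • τ a := by
  rw [Algebra.smul_def, map_mul, hτc, ← Algebra.smul_def]

theorem iterate_map_apply_eq_skewPow_smul (hτc : ∀ c, τ (algebraMap C A c) = algebraMap C A (τc c))
    {δ : A → A} {W : C} (hskew : ∀ a, τ (δ a) = W • δ (τ a)) (k : ℕ) (a : A) :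
    τ^[k] (δ a) = skewPow τc W k • δ (τ^[k] a) := by
  induction k with
  | zero => rw [skewPow, prod_range_zero, one_smul, Function.iterate_zero_apply,
      Function.iterate_zero_apply]
  | succ k ih =>
    rw [Function.iterate_succ_apply', ih, map_smul_of_compatible hτc, hskew, smul_smul, mul_comm,
      ← skewPow_succ', Function.iterate_succ_apply']

/-- The inner `τ`-derivation defined by `d`. -/
def innerSkewDer (τ : A →+* A) (d a : A) : A := d * a - τ a * d

theorem iterate_innerSkewDer_algebraMap
    (hτc : ∀ c, τ (algebraMap C A c) = algebraMap C A (τc c)) {W : C} {d : A}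
    (hd : τ d = W • d) (m : ℕ) (c : C) :
    (innerSkewDer τ d)^[m] (algebraMap C A c) = twistedDiff τc W m c • d ^ m := by
  induction m with
  | zero => rw [Function.iterate_zero_apply, pow_zero, twistedDiff, Algebra.algebraMap_eq_smul_one]
  | succ m ih =>
    rw [Function.iterate_succ_apply', ih]
    simp only [innerSkewDer, map_smul_of_compatible hτc, map_pow, hd, smul_pow, mul_smul_comm,
      smul_mul_assoc, smul_smul, ← pow_succ, ← pow_succ', ← sub_smul]
    rw [twistedDiff, mul_comm (τc _)]

theorem iterate_twistedDiff_smul_pow_eq_zero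
    (hτc : ∀ c, τ (algebraMap C A c) = algebraMap C A (τc c)) {W : C} {d : A} {l : ℕ}
    (hW : W ^ l = 1) (hd : τ d = W • d) (hnil : ∀ a, (innerSkewDer τ d)^[l] a = 0)
    (c : C) (j : ℕ) : τc^[j] (twistedDiff τc W l c) • d ^ l = 0 := by
  have hdl : τ (d ^ l) = d ^ l := by rw [map_pow, hd, smul_pow, hW, one_smul]
  induction j with
  | zero => rw [Function.iterate_zero_apply, ← iterate_innerSkewDer_algebraMap hτc hd, hnil]
  | succ j ih =>
    rw [Function.iterate_succ_apply', ← hdl, ← map_smul_of_compatible hτc, ih, map_zero]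

theorem vandermonde_smul_commutator_eq_zero
    (hτc : ∀ c, τ (algebraMap C A c) = algebraMap C A (τc c)) {l : ℕ} (hl : 0 < l) {W : C}
    (hW : W ^ l = 1) (hτl : ∀ a, τ^[l] a = a) {d : A} (hd : τ d = W • d)
    (hnil : ∀ a, (innerSkewDer τ d)^[l] a = 0) (a : A) :
    (∏ i ∈ range l, ∏ j ∈ range i, (skewPow τc W i - skewPow τc W j)) •
      (d ^ l * a - a * d ^ l) = 0 := by
  set N := skewPow τc W
  set t := ∏ i ∈ range l, ∏ j ∈ range i, (N i - N j)
  have htN : ∀ k, 0 < k → k < l → newtonCoeff N l k • algebraMap C A t = 0 := by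
    intro k hk hkl
    obtain ⟨v, hv⟩ : (∏ i ∈ range (k + 1), ∏ j ∈ range i, (N i - N j)) ∣ t :=
      prod_dvd_prod_of_subset _ _ _ (range_subset_range.2 hkl)
    rw [Algebra.smul_def, ← map_mul, hv, ← mul_assoc, newtonCoeff_mul_vandermonde_eq_zero
      (prod_range_zero _) (skewPow_pow_eq_one hW) hk hkl, zero_mul, map_zero]
  have hskew : ∀ a, τ (innerSkewDer τ d a) = W • innerSkewDer τ d (τ a) := fun a => by
    rw [innerSkewDer, innerSkewDer, map_sub, map_mul, map_mul, hd, smul_mul_assoc,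
      mul_smul_comm, smul_sub]
  have hkey := pow_mul_mul_eq_of_skew (RingHom.id A) (τ := τ) (δ := innerSkewDer τ d) hl
    (prod_range_zero _) (fun a => (add_sub_cancel _ _).symm) (Algebra.commutes t d)
    (fun k a => by
      rw [RingHom.id_apply, iterate_map_apply_eq_skewPow_smul hτc hskew, smul_mul_assoc,
        RingHom.id_apply])
    htN hnil hτl a
  rw [Algebra.smul_def, Algebra.commutes, sub_mul, sub_eq_zero]
  exact hkey

/- If the commutator `u` of `d ^ l` and `a` were nonzero, its annihilator would lie in a maximal
ideal, modulo which the skew powers of `q` are distinct by `injOn_skewSeq`. But their Vandermonde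
determinant annihilates `u`. -/
theorem commute_pow_of_inner_nilpotent {K : Type*} [Field K] [Algebra K C]
    (hτc : ∀ c, τ (algebraMap C A c) = algebraMap C A (τc c)) {l : ℕ} (hl : 0 < l)
    {q : K} (hq : IsPrimitiveRoot q l) (hτl : ∀ a, τ^[l] a = a) (hτcl : ∀ c, τc^[l] c = c)
    {d : A} (hd : τ d = algebraMap K C q • d) (hnil : ∀ a, (innerSkewDer τ d)^[l] a = 0)
    (a : A) : Commute (d ^ l) a := by
  set W := algebraMap K C q
  have hW : W ^ l = 1 := by rw [← map_pow, hq.pow_eq_one, map_one]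
  by_contra hcomm
  set u := d ^ l * a - a * d ^ l
  have hu : Ideal.torsionOf C A u ≠ ⊤ := by
    rwa [Ne, Ideal.torsionOf_eq_top_iff, sub_eq_zero]
  obtain ⟨𝔪, h𝔪, hle⟩ := Ideal.exists_le_maximal _ hu
  let _ : Field (C ⧸ 𝔪) := Ideal.Quotient.field 𝔪
  let χ : C →+* AlgebraicClosure (C ⧸ 𝔪) := (algebraMap (C ⧸ 𝔪) _).comp (Ideal.Quotient.mk 𝔪)
  have hχ : ∀ c, c • u = 0 → χ c = 0 := fun c hc => by
    rw [RingHom.comp_apply, Ideal.Quotient.eq_zero_iff_mem.2 (hle hc), map_zero]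
  have hinj : Set.InjOn (skewSeq τc W χ) (Set.Iio l) := by
    refine injOn_skewSeq hl hτcl (hq.map_of_injective (χ.comp (algebraMap K C)).injective) hW
      fun c j => hχ _ ?_
    rw [smul_sub, ← smul_mul_assoc, ← mul_smul_comm,
      iterate_twistedDiff_smul_pow_eq_zero hτc hW hd hnil, zero_mul, mul_zero, sub_zero]
  set N := skewPow τc W
  set t := ∏ i ∈ range l, ∏ j ∈ range i, (N i - N j)
  have ht : χ t ≠ 0 := by
    simp only [t, map_prod, map_sub, prod_ne_zero_iff, mem_range, sub_ne_zero]
    exact fun i hi j hj hij => hj.ne' (hinj hi (hj.trans hi) hij)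
  exact ht (hχ t (vandermonde_smul_commutator_eq_zero hτc hl hW hτl hd hnil a))

end Inner

section FixedIdempotent

variable {C : Type*} [CommRing C]

theorem map_mul_eq_zero_of_mem_span {R : Type*} [Ring R] (f : C →+* R) {S : Set C} {g : C}
    (hg : g ∈ Ideal.span S) {z : R} (hz : ∀ c ∈ S, f c * z = 0) : f g * z = 0 := by
  induction hg using Submodule.span_induction with
  | mem c hc => exact hz c hc
  | zero => rw [map_zero, zero_mul]
  | add c c' _ _ hc hc' => rw [map_add, add_mul, hc, hc', add_zero]
  | smul a c _ hc => rw [smul_eq_mul, map_mul, mul_assoc, hc, mul_zero]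

-- The witness is the product of the averages of the powers of the `u i`.
theorem exists_one_sub_mem_span_of_pow_eq_one {l : ℕ} (hlC : IsUnit (l : C)) {ι : Type*}
    (s : Finset ι) {u : ι → C} (hu : ∀ i ∈ s, u i ^ l = 1) :
    ∃ e, (∀ i ∈ s, u i * e = e) ∧ 1 - e ∈ Ideal.span ((fun i => u i - 1) '' s) := by
  obtain ⟨v, hv⟩ := hlC.exists_left_inv
  set p : ι → C := fun i => v * ∑ m ∈ range l, u i ^ m
  have hp : ∀ i ∈ s, u i * p i = p i := fun i hi => by
    rw [← sub_eq_zero, ← sub_one_mul, mul_left_comm, mul_geom_sum, hu i hi, sub_self, mul_zero]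
  refine ⟨∏ i ∈ s, p i, fun i hi => ?_, ?_⟩
  · obtain ⟨c, hc⟩ := dvd_prod_of_mem p hi
    rw [hc, ← mul_assoc, hp i hi]
  · set I := Ideal.span ((fun i => u i - 1) '' (s : Set ι))
    have hmk : ∀ i ∈ s, Ideal.Quotient.mk I (u i) = 1 := fun i hi => by
      rw [← map_one (Ideal.Quotient.mk I), Ideal.Quotient.mk_eq_mk_iff_sub_mem]
      exact Ideal.subset_span ⟨i, hi, rfl⟩
    rw [← Ideal.Quotient.mk_eq_mk_iff_sub_mem, map_one, map_prod]
    refine (prod_eq_one fun i hi => ?_).symm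
    simp only [p, map_mul, map_sum, map_pow, hmk i hi, one_pow, sum_const, card_range, nsmul_one]
    rw [← map_natCast (Ideal.Quotient.mk I), ← map_mul, hv, map_one]

variable {τ : C →+* C} {W : C} {l : ℕ}

theorem exists_idempotent_absorbing (hl : 0 < l) (hlC : IsUnit (l : C)) (hτl : ∀ c, τ^[l] c = c)
    (hW : W ^ l = 1) :
    ∃ e, (∀ k, (τ^[k] W - W) * e = 0) ∧
      1 - e ∈ Ideal.span ((fun k => τ^[k] W - W) '' Set.Iio l) := by
  have hWinv : W ^ (l - 1) * W = 1 := by rw [← pow_succ, Nat.sub_add_cancel hl, hW]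
  obtain ⟨e, he, hspan⟩ := exists_one_sub_mem_span_of_pow_eq_one hlC (range l)
    (u := fun k => W ^ (l - 1) * τ^[k] W) fun k _ => by
      rw [mul_pow, ← iterate_map_pow, pow_right_comm, hW, one_pow, iterate_map_one, one_mul]
  refine ⟨e, fun k => ?_, Ideal.span_le.2 ?_ hspan⟩
  · have hmod : τ^[k] W = τ^[k % l] W :=
      (Function.IsPeriodicPt.iterate_mod_apply (hτl W) k).symm
    rw [hmod]
    linear_combination W * he (k % l) (mem_range.2 (Nat.mod_lt k hl)) - τ^[k % l] W * e * hWinv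
  · rintro _ ⟨k, hk, rfl⟩
    simp only [SetLike.mem_coe]
    rw [← hWinv, ← mul_sub]
    exact Ideal.mul_mem_left _ _ (Ideal.subset_span ⟨k, mem_range.1 hk, rfl⟩)

theorem exists_fixed_idempotent (hl : 0 < l) (hlC : IsUnit (l : C)) (hτl : ∀ c, τ^[l] c = c)
    (hW : W ^ l = 1) :
    ∃ e, τ e = e ∧ IsIdempotentElem e ∧ (∀ k, (τ^[k] W - W) * e = 0) ∧
      1 - e ∈ Ideal.span ((fun k => τ^[k] W - W) '' Set.Iio l) := by
  obtain ⟨e, heW, hspan⟩ := exists_idempotent_absorbing hl hlC hτl hW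
  have habsorb : ∀ c, (∀ k, (τ^[k] W - W) * c = 0) → e * c = c := fun c hc => by
    have h := map_mul_eq_zero_of_mem_span (RingHom.id C) hspan
      (by rintro _ ⟨k, -, rfl⟩; exact hc k)
    rwa [RingHom.id_apply, sub_mul, one_mul, sub_eq_zero, eq_comm] at h
  have hτ : ∀ c, (∀ k, (τ^[k] W - W) * c = 0) → ∀ k, (τ^[k] W - W) * τ c = 0 := by
    intro c hc
    have hsucc : ∀ k, (τ^[k + 1] W - τ W) * τ c = 0 := fun k => by
      rw [Function.iterate_succ_apply', ← map_sub, ← map_mul, hc, map_zero]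
    have hτW : (W - τ W) * τ c = 0 := by
      simpa only [Nat.sub_add_cancel hl, hτl] using hsucc (l - 1)
    rintro (_ | k)
    · rw [Function.iterate_zero_apply, sub_self, zero_mul]
    · rw [← sub_sub_sub_cancel_right _ _ (τ W), sub_mul, hsucc, hτW, sub_zero]
  have hiter : ∀ m k, (τ^[k] W - W) * τ^[m] e = 0 := by
    intro m
    induction m with
    | zero => exact heW
    | succ m ih => rw [Function.iterate_succ_apply']; exact hτ _ ih
  have hτe : e = τ e * e := by
    have h := congrArg τ (habsorb _ (hiter (l - 1)))
    rwa [map_mul, ← Function.iterate_succ_apply' τ, Nat.succ_eq_add_one, Nat.sub_add_cancel hl, hτl,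
      eq_comm] at h
  exact ⟨e, (habsorb (τ e) (hiter 1)).symm.trans ((mul_comm _ _).trans hτe.symm), habsorb e heW,
    heW, hspan⟩

theorem skewPow_mul_eq_pow_mul {e : C} (he : ∀ k, (τ^[k] W - W) * e = 0) (k : ℕ) :
    skewPow τ W k * e = W ^ k * e := by
  induction k with
  | zero => rw [skewPow, prod_range_zero, pow_zero]
  | succ k ih =>
    have hk : τ^[k] W * e = W * e := by rw [← sub_eq_zero, ← sub_mul, he]
    rw [skewPow, prod_range_succ, mul_assoc, hk, mul_left_comm, ← skewPow, ih, pow_succ', mul_assoc]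

theorem iterate_sub_mem_span (k : ℕ) (c : C) :
    τ^[k] c - c ∈ Ideal.span (Set.range fun b => τ b - b) := by
  induction k with
  | zero => rw [Function.iterate_zero_apply, sub_self]; exact Ideal.zero_mem _
  | succ k ih =>
    rw [Function.iterate_succ_apply', ← sub_add_sub_cancel _ (τ^[k] c)]
    exact Ideal.add_mem _ (Ideal.subset_span ⟨_, rfl⟩) ih

end FixedIdempotent

theorem bijective_of_iterate_eq_id {α : Type*} {f : α → α} {l : ℕ} (hl : 0 < l)
    (hf : f^[l] = id) : Function.Bijective f := by
  have hl' : (l - 1) + 1 = l := Nat.sub_add_cancel hl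
  refine Function.bijective_iff_has_inverse.2 ⟨f^[l - 1], fun a => ?_, fun a => ?_⟩
  · rw [← Function.iterate_succ_apply f, Nat.succ_eq_add_one, hl', hf, id]
  · rw [← Function.iterate_succ_apply' f, Nat.succ_eq_add_one, hl', hf, id]

section SkewDerivation

variable {C A : Type*} [CommRing C] [Ring A] [Algebra C A] {τ : A →+* A} {τc : C →+* C} {δ : A →+ A}

theorem map_algebraMap_eq_zero_of_fixed_idempotent
    (hτc : ∀ c, τ (algebraMap C A c) = algebraMap C A (τc c))
    (hδ : ∀ a b, δ (a * b) = δ a * b + τ a * δ b) {e : C} (hτe : τc e = e)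
    (hee : IsIdempotentElem e) : δ (algebraMap C A e) = 0 := by
  have hδe : δ (algebraMap C A e) = e • δ (algebraMap C A e) + e • δ (algebraMap C A e) := by
    conv_lhs => rw [← hee, map_mul, hδ, hτc, hτe, ← Algebra.commutes, ← Algebra.smul_def]
  have hδe0 : e • δ (algebraMap C A e) = 0 := by
    have h := congrArg (e • ·) hδe
    simpa only [smul_add, smul_smul, hee.eq, left_eq_add] using h
  rwa [hδe0, add_zero] at hδe

theorem map_smul_of_fixed_idempotent (hτc : ∀ c, τ (algebraMap C A c) = algebraMap C A (τc c))
    (hδ : ∀ a b, δ (a * b) = δ a * b + τ a * δ b) {e : C} (hτe : τc e = e)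
    (hee : IsIdempotentElem e) (a : A) : δ (e • a) = e • δ a := by
  rw [Algebra.smul_def, hδ, map_algebraMap_eq_zero_of_fixed_idempotent hτc hδ hτe hee, zero_mul,
    zero_add, hτc, hτe, ← Algebra.smul_def]

-- A central element `c` gives `(τ c - c) δ(a) = -δ(c) a + τ(a) δ(c)`, by expanding `δ(ca) = δ(ac)`.
theorem exists_smul_eq_innerSkewDer (hτc : ∀ c, τ (algebraMap C A c) = algebraMap C A (τc c))
    (hδ : ∀ a b, δ (a * b) = δ a * b + τ a * δ b) {g : C}
    (hg : g ∈ Ideal.span (Set.range fun c => τc c - c)) :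
    ∃ d, ∀ a, g • δ a = innerSkewDer τ d a := by
  induction hg using Submodule.span_induction with
  | mem c hc =>
    obtain ⟨c, rfl⟩ := hc
    refine ⟨-δ (algebraMap C A c), fun a => ?_⟩
    have h := congrArg δ (Algebra.commutes c a)
    rw [hδ, hδ, hτc, ← Algebra.smul_def, ← Algebra.commutes c (δ a), ← Algebra.smul_def] at h
    rw [innerSkewDer, sub_smul, neg_mul, mul_neg, sub_neg_eq_add, sub_eq_iff_eq_add,
      add_assoc, add_comm (τ a * _), ← h, neg_add_cancel_left]
  | zero => exact ⟨0, fun a => by rw [innerSkewDer, zero_smul, zero_mul, mul_zero, sub_zero]⟩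
  | add c c' _ _ hc hc' =>
    obtain ⟨d, hd⟩ := hc
    obtain ⟨d', hd'⟩ := hc'
    exact ⟨d + d', fun a => by
      rw [add_smul, hd, hd', innerSkewDer, innerSkewDer, innerSkewDer, add_mul, mul_add,
        sub_add_sub_comm]⟩
  | smul b c _ hc =>
    obtain ⟨d, hd⟩ := hc
    exact ⟨b • d, fun a => by
      rw [smul_eq_mul, mul_smul, hd, innerSkewDer, innerSkewDer, smul_sub, smul_mul_assoc,
        mul_smul_comm]⟩

theorem iterate_innerSkewDer_eq_smul {g : C} (hgg : IsIdempotentElem g)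
    (hδg : ∀ a, δ (g • a) = g • δ a) {d : A} (hd : ∀ a, g • δ a = innerSkewDer τ d a) (m : ℕ)
    (a : A) : (innerSkewDer τ d)^[m + 1] a = g • δ^[m + 1] a := by
  induction m with
  | zero => exact (hd a).symm
  | succ m ih =>
    rw [Function.iterate_succ_apply', ih, Function.iterate_succ_apply' δ (m + 1), ← hd, hδg,
      smul_smul, hgg]

-- `z = τ(d) - W d` satisfies `z b = τ(b) z`, so it is killed by every `τ c - c`, hence by `g`.
theorem map_eq_smul_of_innerSkewDer_eq
    (hτc : ∀ c, τ (algebraMap C A c) = algebraMap C A (τc c)) (hτ : Function.Surjective τ) {W : C}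
    (hskew : ∀ a, τ (δ a) = W • δ (τ a)) {g : C} (hτg : τc g = g)
    (hg : g ∈ Ideal.span (Set.range fun c => τc c - c)) {d : A} (hgd : g • d = d)
    (hd : ∀ a, g • δ a = innerSkewDer τ d a) : τ d = W • d := by
  have hsmul := map_smul_of_compatible hτc
  set z := τ d - W • d
  have hz : ∀ b, z * b = τ b * z := by
    intro b
    obtain ⟨a, rfl⟩ := hτ b
    have h := congrArg τ (hd a)
    rw [hsmul, hτg, hskew, smul_comm, hd, innerSkewDer, innerSkewDer, map_sub, map_mul, map_mul,
      smul_sub, sub_eq_sub_iff_sub_eq_sub] at h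
    rw [sub_mul, mul_sub, smul_mul_assoc, mul_smul_comm, ← neg_sub, h, neg_sub]
  have hgz0 : g • z = 0 := by
    rw [Algebra.smul_def]
    refine map_mul_eq_zero_of_mem_span (algebraMap C A) hg ?_
    rintro _ ⟨c, rfl⟩
    rw [map_sub, sub_mul, ← hτc, ← hz, Algebra.commutes, sub_self]
  have hgz : g • z = z := by
    have hτd : g • τ d = τ d := by
      nth_rw 1 [← hτg]
      rw [← hsmul, hgd]
    rw [smul_sub, hτd, smul_comm, hgd]
  exact sub_eq_zero.1 (hgz.symm.trans hgz0)

theorem exists_innerSkewDer_central_pow {K : Type*} [Field K] [Algebra K C]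
    (hτc : ∀ c, τ (algebraMap C A c) = algebraMap C A (τc c))
    (hδ : ∀ a b, δ (a * b) = δ a * b + τ a * δ b) {q : K} {l : ℕ} (hl : 0 < l)
    (hq : IsPrimitiveRoot q l) (hτcl : ∀ c, τc^[l] c = c) (hτl : ∀ a, τ^[l] a = a)
    (hskew : ∀ a, τ (δ a) = algebraMap K C q • δ (τ a)) (hnil : ∀ a, δ^[l] a = 0) {g : C}
    (hτg : τc g = g) (hgg : IsIdempotentElem g)
    (hg : g ∈ Ideal.span (Set.range fun c => τc c - c)) :
    ∃ d : A, g • d = d ∧ (∀ a, g • δ a = innerSkewDer τ d a) ∧ τ d = algebraMap K C q • d ∧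
      ∀ a, Commute (d ^ l) a := by
  obtain ⟨d', hd'⟩ := exists_smul_eq_innerSkewDer hτc hδ hg
  have hgd : g • g • d' = g • d' := by rw [smul_smul, hgg]
  have hd : ∀ a, g • δ a = innerSkewDer τ (g • d') a := fun a => by
    rw [innerSkewDer, smul_mul_assoc, mul_smul_comm, ← smul_sub, ← innerSkewDer, ← hd', smul_smul,
      hgg]
  have hτ : Function.Surjective τ := (bijective_of_iterate_eq_id hl (funext hτl)).surjective
  have hτd := map_eq_smul_of_innerSkewDer_eq hτc hτ hskew hτg hg hgd hd
  refine ⟨g • d', hgd, hd, hτd, commute_pow_of_inner_nilpotent hτc hl hq hτl hτcl hτd fun a => ?_⟩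
  obtain ⟨m, rfl⟩ := Nat.exists_eq_succ_of_ne_zero hl.ne'
  rw [iterate_innerSkewDer_eq_smul hgg (map_smul_of_fixed_idempotent hτc hδ hτg hgg) hd, hnil,
    smul_zero]

end SkewDerivation

section OreExtension

variable {C A R : Type*} [CommRing C] [Ring A] [Algebra C A] [Ring R] {τ : A →+* A}
  {τc : C →+* C} {δ : A →+ A} {φ : A →+* R} {x : R}

theorem commute_map_of_fixed_idempotent (hx : ∀ a, x * φ a = φ (τ a) * x + φ (δ a))
    (hτc : ∀ c, τ (algebraMap C A c) = algebraMap C A (τc c))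
    (hδ : ∀ a b, δ (a * b) = δ a * b + τ a * δ b) {e : C} (hτe : τc e = e)
    (hee : IsIdempotentElem e) : Commute (φ (algebraMap C A e)) x := by
  rw [commute_iff_eq, hx, hτc, hτe, map_algebraMap_eq_zero_of_fixed_idempotent hτc hδ hτe hee,
    map_zero, add_zero]

theorem pow_mul_map_of_forall_mul_map {y : R} (hy : ∀ a, y * φ a = φ (τ a) * y) (k : ℕ) (a : A) :
    y ^ k * φ a = φ (τ^[k] a) * y ^ k := by
  induction k generalizing a with
  | zero => rw [pow_zero, one_mul, mul_one, Function.iterate_zero_apply]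
  | succ k ih =>
    rw [pow_succ, mul_assoc, hy, ← mul_assoc, ih, mul_assoc, Function.iterate_succ_apply]

theorem iterate_algebraMap (hτc : ∀ c, τ (algebraMap C A c) = algebraMap C A (τc c)) (k : ℕ)
    (c : C) : τ^[k] (algebraMap C A c) = algebraMap C A (τc^[k] c) :=
  (Function.Semiconj.iterate_right (fun c => (hτc c).symm) k c).symm

theorem pow_eq_zero_of_forall_mul_map (hτc : ∀ c, τ (algebraMap C A c) = algebraMap C A (τc c))
    {W : C} (hW : ∀ r, Commute (φ (algebraMap C A W)) r) {l : ℕ} (hl : 0 < l) {g : C}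
    (hg : g ∈ Ideal.span ((fun k => τc^[k] W - W) '' Set.Iio l)) {y : R}
    (hy : ∀ a, y * φ a = φ (τ a) * y) (hgy : φ (algebraMap C A g) * y = y) : y ^ l = 0 := by
  have hgyl : φ (algebraMap C A g) * y ^ l = y ^ l := by
    rw [← Nat.sub_add_cancel hl, pow_succ', ← mul_assoc, hgy]
  rw [← hgyl]
  refine map_mul_eq_zero_of_mem_span (φ.comp (algebraMap C A)) hg ?_
  rintro _ ⟨k, hk, rfl⟩
  have hyk := pow_mul_map_of_forall_mul_map hy k (algebraMap C A W)
  rw [iterate_algebraMap hτc, ← (hW _).eq] at hyk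
  rw [← Nat.add_sub_cancel' (Set.mem_Iio.1 hk).le, pow_add, ← mul_assoc, map_sub, sub_mul,
    RingHom.comp_apply, RingHom.comp_apply, hyk, sub_self, zero_mul]

variable {K : Type*} [Field K] [Algebra K C] [Algebra K R]

-- On the part cut out by `g`, `x` is the sum of `d` and of `y = g x - d`, and `y` is nilpotent.
theorem map_mul_pow_eq_map_pow {q : K} {l : ℕ} (hl : 0 < l) (hq : IsPrimitiveRoot q l)
    (hx : ∀ a, x * φ a = φ (τ a) * x + φ (δ a))
    (hφq : φ (algebraMap C A (algebraMap K C q)) = algebraMap K R q)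
    (hτc : ∀ c, τ (algebraMap C A c) = algebraMap C A (τc c)) {g : C}
    (hgg : IsIdempotentElem g) (hgx : Commute (φ (algebraMap C A g)) x)
    (hg : g ∈ Ideal.span
      ((fun k => τc^[k] (algebraMap K C q) - algebraMap K C q) '' Set.Iio l))
    {d : A} (hgd : g • d = d) (hd : ∀ a, g • δ a = innerSkewDer τ d a)
    (hτd : τ d = algebraMap K C q • d) : φ (algebraMap C A g) * x ^ l = φ (d ^ l) := by
  set G := φ (algebraMap C A g)
  have hGG : IsIdempotentElem G := (hgg.map (algebraMap C A)).map φ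
  have hGa : ∀ a, Commute G (φ a) := fun a => (Algebra.commute_algebraMap_left g a).map φ
  set y := G * x - φ d
  have hya : ∀ a, y * φ a = φ (τ a) * y := fun a => by
    have hGδ : G * φ (δ a) = φ d * φ a - φ (τ a) * φ d := by
      rw [← map_mul φ d, ← map_mul φ (τ a), ← map_sub, ← innerSkewDer, ← hd, Algebra.smul_def,
        map_mul]
    rw [sub_mul, mul_assoc, hx, mul_add, hGδ, mul_sub, ← mul_assoc, (hGa _).eq, mul_assoc]
    abel
  have hGy : G * y = y := by
    rw [mul_sub, ← mul_assoc, hGG, ← map_mul, ← Algebra.smul_def, hgd]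
  have hyl : y ^ l = 0 := pow_eq_zero_of_forall_mul_map hτc
    (fun r => hφq ▸ Algebra.commute_algebraMap_left q r) hl hg hya hGy
  have hyd : y * φ d = q • (φ d * y) := by
    rw [hya, hτd, Algebra.smul_def, map_mul, hφq, ← Algebra.smul_def, smul_mul_assoc]
  have hadd := add_pow_of_qCommute hl hq hyd
  rwa [hyl, add_zero, add_sub_cancel, hgx.mul_pow, hGG.pow_eq hl.ne', ← map_pow] at hadd

theorem pow_mul_map_mul_eq_of_absorbing {q : K} {l : ℕ} (hl : 0 < l)
    (hq : IsPrimitiveRoot q l) (hx : ∀ a, x * φ a = φ (τ a) * x + φ (δ a))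
    (hφq : φ (algebraMap C A (algebraMap K C q)) = algebraMap K R q)
    (hτc : ∀ c, τ (algebraMap C A c) = algebraMap C A (τc c)) (hτl : ∀ a, τ^[l] a = a)
    (hskew : ∀ a, τ (δ a) = algebraMap K C q • δ (τ a)) (hnil : ∀ a, δ^[l] a = 0) {e : C}
    (he : ∀ k, (τc^[k] (algebraMap K C q) - algebraMap K C q) * e = 0)
    (hex : Commute (φ (algebraMap C A e)) x) (a : A) :
    x ^ l * φ a * φ (algebraMap C A e) = φ a * x ^ l * φ (algebraMap C A e) := by
  refine pow_mul_mul_eq_of_skew φ (N := fun k => q ^ k) hl (pow_zero q) hx hex (fun k a => ?_)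
    (fun k hk hkl => by rw [newtonCoeff_primitiveRoot_pow_eq_zero hq hk hkl, zero_smul]) hnil hτl a
  rw [iterate_map_apply_eq_skewPow_smul hτc hskew, ← map_mul, ← Algebra.commutes,
    ← Algebra.smul_def, smul_smul, mul_comm, skewPow_mul_eq_pow_mul he, mul_smul, Algebra.smul_def,
    Algebra.smul_def e, Algebra.commutes e, map_mul, map_pow, map_pow, hφq, ← map_pow,
    ← Algebra.smul_def, map_mul]

theorem pow_mul_map_eq_of_qSkew {q : K} {l : ℕ} (hl : 0 < l) (hq : IsPrimitiveRoot q l)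
    (hx : ∀ a, x * φ a = φ (τ a) * x + φ (δ a))
    (hφq : φ (algebraMap C A (algebraMap K C q)) = algebraMap K R q)
    (hτc : ∀ c, τ (algebraMap C A c) = algebraMap C A (τc c)) (hτcl : ∀ c, τc^[l] c = c)
    (hτl : ∀ a, τ^[l] a = a) (hδ : ∀ a b, δ (a * b) = δ a * b + τ a * δ b)
    (hskew : ∀ a, τ (δ a) = algebraMap K C q • δ (τ a)) (hnil : ∀ a, δ^[l] a = 0) (a : A) :
    x ^ l * φ a = φ a * x ^ l := by
  have : NeZero l := ⟨hl.ne'⟩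
  have hlC : IsUnit (l : C) := by
    simpa using (IsUnit.mk0 (l : K) hq.neZero'.out).map (algebraMap K C)
  obtain ⟨e, hτe, hee, heW, hspan⟩ := exists_fixed_idempotent hl hlC hτcl
    (by rw [← map_pow, hq.pow_eq_one, map_one] : algebraMap K C q ^ l = 1)
  set g := 1 - e
  have hτg : τc g = g := by rw [map_sub, map_one, hτe]
  have hgg : IsIdempotentElem g := hee.one_sub
  obtain ⟨d, hgd, hd, hτd, hdl⟩ := exists_innerSkewDer_central_pow hτc hδ hl hq hτcl hτl hskew hnil
    hτg hgg (Ideal.span_le.2 (by rintro _ ⟨k, -, rfl⟩; exact iterate_sub_mem_span k _) hspan)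
  have hgx := commute_map_of_fixed_idempotent hx hτc hδ hτg hgg
  have hgl := map_mul_pow_eq_map_pow hl hq hx hφq hτc hgg hgx hspan hgd hd hτd
  have he_part := pow_mul_map_mul_eq_of_absorbing hl hq hx hφq hτc hτl hskew hnil heW
    (commute_map_of_fixed_idempotent hx hτc hδ hτe hee) a
  have hg_part : x ^ l * φ a * φ (algebraMap C A g) = φ a * x ^ l * φ (algebraMap C A g) := by
    rw [mul_assoc, ← map_mul, ← Algebra.commutes, map_mul, ← mul_assoc, ← (hgx.pow_right l).eq, hgl,
      ← map_mul, (hdl a).eq, map_mul, ← hgl, (hgx.pow_right l).eq, mul_assoc]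
  rw [map_sub, map_sub, map_one, map_one, mul_sub, mul_sub, mul_one, mul_one, he_part] at hg_part
  exact sub_left_injective hg_part

end OreExtension

theorem stmt14_general {K R : Type*} [Field K] [Ring R] [Algebra K R] (A : Subalgebra K R) (x : R)
    (τ : A →+* A) (δ : A →+ A) (hδleib : ∀ a b, δ (a * b) = δ a * b + τ a * δ b)
    {l : ℕ} (hl : 0 < l) {q : K} (hq : IsPrimitiveRoot q l)
    (hskew : ∀ a, τ (δ a) = q • δ (τ a))
    (hore : ∀ a : A, x * (a : R) = (τ a : R) * x + (δ a : R))
    (hnil : ∀ a, δ^[l] a = 0) (hτl : τ^[l] = id)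
    (hgen : Algebra.adjoin K ((A : Set R) ∪ {x}) = ⊤) :
    (∀ a : A, x ^ l * (a : R) = ((τ^[l]) a : R) * x ^ l) ∧ x ^ l ∈ Subalgebra.center K R := by
  let _ : Algebra (Subalgebra.center K A) A :=
    (Subalgebra.center K A).val.toRingHom.toAlgebra' fun c a =>
      (Subalgebra.mem_center_iff.1 c.2 a).symm
  let τc : Subalgebra.center K A →+* Subalgebra.center K A :=
    (Subring.centerCongr (RingEquiv.ofBijective τ (bijective_of_iterate_eq_id hl hτl))).toRingHom
  have hτc : ∀ c, τ (algebraMap (Subalgebra.center K A) A c) = algebraMap _ A (τc c) := fun _ => rfl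
  have hcomm : ∀ a : A, x ^ l * (a : R) = (a : R) * x ^ l :=
    pow_mul_map_eq_of_qSkew (φ := (A.val : A →+* R)) hl hq hore rfl hτc
      (fun c => Subtype.ext ((iterate_algebraMap hτc l c).symm.trans (congrFun hτl c)))
      (congrFun hτl) hδleib (fun a => (hskew a).trans (Algebra.smul_def _ _)) hnil
  have hcentralizer : Algebra.adjoin K ((A : Set R) ∪ {x}) ≤ Subalgebra.centralizer K {x ^ l} := by
    rw [Algebra.adjoin_le_iff]
    rintro r (hr | rfl) _ rfl
    · exact hcomm ⟨r, hr⟩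
    · exact pow_mul_comm' _ _
  refine ⟨fun a => by rw [hτl]; exact hcomm a, Subalgebra.mem_center_iff.2 fun r => ?_⟩
  rw [hgen] at hcentralizer
  exact (hcentralizer (Algebra.mem_top (x := r)) _ rfl).symm

/-- in an Ore extension `R = A[x; τ, δ]` with `q`-skew condition
`τδ = ε^s δτ` at a primitive `l`-th root of unity `ε` with `gcd(l,s) = 1`, with `δ`
(locally) nilpotent so that `δ^l = 0` and `τ^l = id`, the element `x^l` satisfies
`x^l a = τ^l(a) x^l` for all `a ∈ A` and is central in `R_ε`. -/
theorem stmt14 {R : Type*} [Ring R] [Algebra ℂ R] (A : Subalgebra ℂ R)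
    (x : R) (τ δ : A → A)
    (hτadd : ∀ a b, τ (a + b) = τ a + τ b)
    (hτmul : ∀ a b, τ (a * b) = τ a * τ b)
    (hτone : τ 1 = 1)
    (hτbij : Function.Bijective τ)
    (hδadd : ∀ a b, δ (a + b) = δ a + δ b)
    (hδleib : ∀ a b, δ (a * b) = δ a * b + τ a * δ b)
    {l : ℕ} (hl : 0 < l) {ε : ℂ} (hε : IsPrimitiveRoot ε l)
    (s : ℤ) (hs : s ≠ 0) (hcop : IsCoprime (l : ℤ) s)
    (hskew : ∀ a, τ (δ a) = ε ^ s • δ (τ a))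
    (hore : ∀ a : A, x * (a : R) = (τ a : R) * x + (δ a : R))
    (hnil : ∀ a, δ^[l] a = 0)
    (hτl : τ^[l] = id)
    (hgen : Algebra.adjoin ℂ ((A : Set R) ∪ {x}) = ⊤) :
    (∀ a : A, x ^ l * (a : R) = ((τ^[l]) a : R) * x ^ l) ∧
      x ^ l ∈ Subalgebra.center ℂ R :=
  stmt14_general A x (RingHom.mk' ⟨⟨τ, hτone⟩, hτmul⟩ hτadd) (AddMonoidHom.mk' δ hδadd) hδleib hl
    (hε.zpow_of_gcd_eq_one s (Int.gcd_comm _ _ ▸ Int.isCoprime_iff_gcd_eq_one.1 hcop))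
    hskew hore hnil hτl hgen
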